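/- arXiv:2210.13902 — 2 statements merged into one kernel-verified Lean document; each statement's English description precedes it below -/
import Mathlib

section
/- Let G = Matrix.fromBlocks a b c d be a (1+n)×(1+n) quaternionic block matrix (a ∈ ℍ, b, c : Fin n → ℍ, d an n×n quaternionic matrix) with det (τ(G)) = 1, and let q : Fin n → ℍ satisfy a + b⬝q ≠ 0. Then det (τ(J₂(G, q))) = (Quaternion.normSq (a + b⬝q))⁻¹ (as a complex number), where J₂(G, q) = d − (c + d*q)*(a + b⬝q)⁻¹*b. -/
/-!
The map `τ` is a multiplicative complexification, so it turns the quaternionic factorization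
`G * [1 0; q 1] = [1 0; (c + d q) p⁻¹ 1] * [p b; 0 J₂]`, with `p = a + b⬝q`, into a factorization
of complex matrices. Both unipotent factors have determinant `1` after applying `τ`, and the
block upper triangular factor has determinant `det τ(p) * det τ(J₂) = normSq p * det τ(J₂)`.
Hence `normSq p * det τ(J₂) = det τ(G) = 1`.
-/

/-- The complex 2×2 matrix representing a quaternion `x = x₁ + x₂ i + x₃ j + x₄ k`. -/
noncomputable def tauEntry (x : Quaternion ℝ) : Matrix (Fin 2) (Fin 2) ℂ :=
  !![(x.re : ℂ) - (x.imI : ℂ) * Complex.I, -(x.imJ : ℂ) + (x.imK : ℂ) * Complex.I;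
     (x.imJ : ℂ) + (x.imK : ℂ) * Complex.I, (x.re : ℂ) + (x.imI : ℂ) * Complex.I]

/-- The complexification `τ` of a quaternionic matrix. -/
noncomputable def tau {ι κ : Type*} (a : Matrix ι κ (Quaternion ℝ)) :
    Matrix (ι × Fin 2) (κ × Fin 2) ℂ :=
  Matrix.of fun r s => tauEntry (a r.1 s.1) r.2 s.2

/-- A quaternion viewed as a 1×1 quaternionic matrix. -/
def scal (a : Quaternion ℝ) : Matrix (Fin 1) (Fin 1) (Quaternion ℝ) :=
  Matrix.of fun _ _ => a

/-- A quaternionic vector viewed as a 1×n row matrix. -/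
def rowOf {n : ℕ} (b : Fin n → Quaternion ℝ) : Matrix (Fin 1) (Fin n) (Quaternion ℝ) :=
  Matrix.of fun _ j => b j

/-- A quaternionic vector viewed as an n×1 column matrix. -/
def colOf {n : ℕ} (c : Fin n → Quaternion ℝ) : Matrix (Fin n) (Fin 1) (Quaternion ℝ) :=
  Matrix.of fun i _ => c i

lemma tauEntry_add (x y : Quaternion ℝ) : tauEntry (x + y) = tauEntry x + tauEntry y := by
  ext i j
  fin_cases i <;> fin_cases j <;> simp [tauEntry] <;> ring

lemma tauEntry_zero : tauEntry 0 = 0 := by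
  ext i j
  fin_cases i <;> fin_cases j <;>
    simp [tauEntry, Quaternion.re_zero, Quaternion.imI_zero, Quaternion.imJ_zero, Quaternion.imK_zero]

lemma tauEntry_one : tauEntry 1 = 1 := by
  ext i j
  fin_cases i <;> fin_cases j <;>
    simp [tauEntry, Quaternion.re_one, Quaternion.imI_one, Quaternion.imJ_one, Quaternion.imK_one]

lemma tauEntry_mul (x y : Quaternion ℝ) : tauEntry (x * y) = tauEntry x * tauEntry y := by
  ext i j
  fin_cases i <;> fin_cases j <;> simp [tauEntry, Matrix.mul_apply] <;> ring_nf <;>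
    simp only [Complex.I_sq] <;> ring

lemma tauEntry_sum {ι : Type*} (s : Finset ι) (f : ι → Quaternion ℝ) :
    tauEntry (∑ i ∈ s, f i) = ∑ i ∈ s, tauEntry (f i) :=
  map_sum (AddMonoidHom.mk' tauEntry tauEntry_add) f s

lemma det_tauEntry (x : Quaternion ℝ) :
    (tauEntry x).det = ((Quaternion.normSq x : ℝ) : ℂ) := by
  rw [Matrix.det_fin_two, Quaternion.normSq_def']
  simp only [tauEntry, Matrix.of_apply, Matrix.cons_val_zero, Matrix.cons_val_one,
    Matrix.cons_val', Matrix.cons_val_fin_one]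
  push_cast
  ring_nf
  simp only [Complex.I_sq]
  ring

lemma tau_mul {ι κ l : Type*} [Fintype κ] (A : Matrix ι κ (Quaternion ℝ))
    (B : Matrix κ l (Quaternion ℝ)) : tau (A * B) = tau A * tau B := by
  ext ⟨i, s⟩ ⟨j, t⟩
  simp only [tau, Matrix.of_apply, Matrix.mul_apply, tauEntry_sum, tauEntry_mul,
    Matrix.sum_apply, Fintype.sum_prod_type]

lemma tau_zero {ι κ : Type*} : tau (0 : Matrix ι κ (Quaternion ℝ)) = 0 := by
  ext r s
  simp [tau, tauEntry_zero]

lemma tau_one {ι : Type*} [DecidableEq ι] : tau (1 : Matrix ι ι (Quaternion ℝ)) = 1 := by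
  ext ⟨i, s⟩ ⟨j, t⟩
  by_cases h : i = j
  · subst h
    simp [tau, tauEntry_one, Matrix.one_apply]
  · simp [tau, tauEntry_zero, h]

/-- `τ` respects block decompositions, up to distributing `× Fin 2` over the sum of index types. -/
lemma tau_fromBlocks {m n : Type*} (A : Matrix m m (Quaternion ℝ)) (B : Matrix m n (Quaternion ℝ))
    (C : Matrix n m (Quaternion ℝ)) (D : Matrix n n (Quaternion ℝ)) :
    tau (Matrix.fromBlocks A B C D) =
      (Matrix.fromBlocks (tau A) (tau B) (tau C) (tau D)).submatrix
        (Equiv.sumProdDistrib m n (Fin 2)) (Equiv.sumProdDistrib m n (Fin 2)) := by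
  ext ⟨i | i, s⟩ ⟨j | j, t⟩ <;> simp [tau]

lemma det_tau_fromBlocks_zero₂₁ {m n : Type*} [Fintype m] [Fintype n] [DecidableEq m]
    [DecidableEq n] (A : Matrix m m (Quaternion ℝ)) (B : Matrix m n (Quaternion ℝ))
    (D : Matrix n n (Quaternion ℝ)) :
    (tau (Matrix.fromBlocks A B 0 D)).det = (tau A).det * (tau D).det := by
  rw [tau_fromBlocks, Matrix.det_submatrix_equiv_self, tau_zero, Matrix.det_fromBlocks_zero₂₁]

lemma det_tau_fromBlocks_one_zero_one {m n : Type*} [Fintype m] [Fintype n] [DecidableEq m]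
    [DecidableEq n] (C : Matrix n m (Quaternion ℝ)) :
    (tau (Matrix.fromBlocks 1 0 C 1)).det = 1 := by
  rw [tau_fromBlocks, Matrix.det_submatrix_equiv_self, tau_zero, Matrix.det_fromBlocks_zero₁₂,
    tau_one, tau_one, Matrix.det_one, Matrix.det_one, one_mul]

lemma det_tau_scal (x : Quaternion ℝ) :
    (tau (scal x)).det = ((Quaternion.normSq x : ℝ) : ℂ) := by
  rw [← det_tauEntry, ← Matrix.det_submatrix_equiv_self (Equiv.uniqueProd (Fin 2) (Fin 1)).symm]
  rfl

/-- The block factorization `G * [1 0; q 1] = [1 0; (c + d q) p⁻¹ 1] * [p b; 0 J₂]`. -/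
lemma fromBlocks_mul_eq_mul_J2 {n : ℕ} (a : Quaternion ℝ) (b c : Fin n → Quaternion ℝ)
    (d : Matrix (Fin n) (Fin n) (Quaternion ℝ)) (q : Fin n → Quaternion ℝ)
    (hq : a + ∑ j, b j * q j ≠ 0) :
    Matrix.fromBlocks (scal a) (rowOf b) (colOf c) d * Matrix.fromBlocks 1 0 (colOf q) 1 =
      Matrix.fromBlocks 1 0
          (colOf fun i => (c i + ∑ k, d i k * q k) * (a + ∑ k, b k * q k)⁻¹) 1 *
        Matrix.fromBlocks (scal (a + ∑ j, b j * q j)) (rowOf b) 0 (Matrix.of fun i j =>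
          d i j - (c i + ∑ k, d i k * q k) * (a + ∑ k, b k * q k)⁻¹ * b j) := by
  simp only [Matrix.fromBlocks_multiply, Matrix.mul_one, Matrix.mul_zero, Matrix.one_mul,
    Matrix.zero_mul, add_zero, zero_add]
  -- The two upper blocks agree definitionally and are closed by `congr`.
  congr 1
  · ext1 i j
    simp only [scal, colOf, Matrix.add_apply, Matrix.of_apply, Matrix.mul_apply,
      Finset.univ_unique, Finset.sum_singleton]
    exact (inv_mul_cancel_right₀ hq _).symm
  · ext1 i j
    simp [rowOf, colOf, Matrix.mul_apply]

/-- If `det τ(G) = 1` for the quaternionic block matrix `G = Matrix.fromBlocks a b c d`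
and `a + b⬝q ≠ 0`, then `det τ(J₂(G, q)) = (normSq (a + b⬝q))⁻¹`, where
`J₂(G, q) = d - (c + d*q)*(a + b⬝q)⁻¹*b`. -/
theorem det_tau_qJ2 {n : ℕ} (a : Quaternion ℝ) (b c : Fin n → Quaternion ℝ)
    (d : Matrix (Fin n) (Fin n) (Quaternion ℝ)) (q : Fin n → Quaternion ℝ)
    (hG : (tau (Matrix.fromBlocks (scal a) (rowOf b) (colOf c) d)).det = 1)
    (hq : a + ∑ j, b j * q j ≠ 0) :
    (tau (Matrix.of fun i j =>
        d i j - (c i + ∑ k, d i k * q k) * (a + ∑ k, b k * q k)⁻¹ * b j)).det =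
      (((Quaternion.normSq (a + ∑ j, b j * q j) : ℝ) : ℂ))⁻¹ := by
  have h := congrArg (fun M => (tau M).det) (fromBlocks_mul_eq_mul_J2 a b c d q hq)
  simp only [tau_mul, Matrix.det_mul] at h
  rw [hG, det_tau_fromBlocks_one_zero_one, det_tau_fromBlocks_one_zero_one,
    det_tau_fromBlocks_zero₂₁, det_tau_scal, one_mul, one_mul] at h
  exact eq_inv_of_mul_eq_one_right h.symm
end

section
/- Let n ≥ 1 and let G = Matrix.fromBlocks a b c d be a complex block matrix with a of size 2×2, b of size 2×2n, c of size 2n×2, d of size 2n×2n, such that det G = 1. Let z be a 2n×2 complex matrix with a + b*z invertible. Then the map T : Matrix (Fin (2n)) (Fin 2) ℂ → Matrix (Fin (2n)) (Fin 2) ℂ, T(w) = (c + d*w)*(a + b*w)⁻¹, is ℂ-differentiable at z, and the determinant of its Fréchet derivative (as a ℂ-linear endomorphism of Matrix (Fin (2n)) (Fin 2) ℂ) equals (det (a + b*z))^(−(2n+2)), i.e. LinearMap.det ((fderiv ℂ T z).toLinearMap) = (det (a + b*z))⁻¹ ^ (2n+2). -/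
/-!
Write `M = a + b z`, `N = c + d z` and let `S = d - N M⁻¹ b` be the Schur complement. Whenever
`a + b w` is invertible, `T w - T z = S (w - z) (a + b w)⁻¹`; this is an exact identity, so
continuity of inversion at `M` alone shows that `T` is differentiable at `z` with derivative
`X ↦ S X M⁻¹`. Left multiplication by `S` on `2n × 2` matrices has determinant `(det S)²` and
right multiplication by `M⁻¹` has determinant `(det M)⁻²ⁿ`. Finally, adding `z`-multiples of the
second block column of `G` to the first gives `1 = det G = det M * det S`, so `det S = (det M)⁻¹`.
-/

section Helpers

attribute [local instance] Matrix.normedAddCommGroup Matrix.normedSpace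

open Filter Topology Asymptotics

variable {m k : Type*} [Fintype m] [Fintype k]

/-- Right multiplication by `P`, as an endomorphism of the space of `m × k` matrices. -/
def matrixMulRight (P : Matrix k k ℂ) : Matrix m k ℂ →ₗ[ℂ] Matrix m k ℂ where
  toFun X := X * P
  map_add' X Y := Matrix.add_mul X Y P
  map_smul' r X := Matrix.smul_mul r X P

/-- Left multiplication by `S`, as an endomorphism of the space of `m × k` matrices. -/
def matrixMulLeft (S : Matrix m m ℂ) : Matrix m k ℂ →ₗ[ℂ] Matrix m k ℂ where
  toFun X := S * X
  map_add' X Y := Matrix.mul_add S X Y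
  map_smul' r X := Matrix.mul_smul S r X

/-- Right multiplication acts on each of the rows separately, by the transpose of `P`. -/
lemma det_matrixMulRight [DecidableEq k] (P : Matrix k k ℂ) :
    LinearMap.det (matrixMulRight P : Matrix m k ℂ →ₗ[ℂ] Matrix m k ℂ) =
      P.det ^ Fintype.card m := by
  have hdet := LinearMap.det_pi (ι := m) (fun _ => Matrix.toLin' P.transpose)
  simp only [LinearMap.det_toLin', Matrix.det_transpose, Finset.prod_const,
    Finset.card_univ] at hdet
  rw [← hdet]
  -- `Matrix m k ℂ` unfolds to the iterated function type `m → k → ℂ`.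
  have heq : (matrixMulRight P : Matrix m k ℂ →ₗ[ℂ] Matrix m k ℂ) =
      (LinearMap.pi (fun i : m => (Matrix.toLin' P.transpose).comp (LinearMap.proj i)) :
        (m → k → ℂ) →ₗ[ℂ] (m → k → ℂ)) := by
    refine LinearMap.ext fun X => funext fun i => ?_
    change (X * P) i = Matrix.toLin' P.transpose (X i)
    rw [Matrix.toLin'_apply, Matrix.mulVec_transpose]
    rfl
  exact congrArg _ heq

lemma det_matrixMulLeft [DecidableEq m] (S : Matrix m m ℂ) :
    LinearMap.det (matrixMulLeft S : Matrix m k ℂ →ₗ[ℂ] Matrix m k ℂ) =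
      S.det ^ Fintype.card k := by
  have hconj : (matrixMulLeft S : Matrix m k ℂ →ₗ[ℂ] Matrix m k ℂ) =
      (Matrix.transposeLinearEquiv k m ℂ ℂ : Matrix k m ℂ →ₗ[ℂ] Matrix m k ℂ) ∘ₗ
        matrixMulRight S.transpose ∘ₗ
        ((Matrix.transposeLinearEquiv k m ℂ ℂ).symm : Matrix m k ℂ →ₗ[ℂ] Matrix k m ℂ) := by
    refine LinearMap.ext fun X => ?_
    change S * X = (X.transpose * S.transpose).transpose
    simp
  rw [hconj, LinearMap.det_conj, det_matrixMulRight, Matrix.det_transpose]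

variable [DecidableEq k]

/-- Obtained from the Schur complement of the first block of `G` after the column operation that turns the
first block column into `(a + b z, c + d z)`. -/
lemma det_mul_det_schur [DecidableEq m] (a : Matrix k k ℂ) (b : Matrix k m ℂ) (c : Matrix m k ℂ)
    (d : Matrix m m ℂ) (z : Matrix m k ℂ) (h : IsUnit (a + b * z)) :
    (a + b * z).det * (d - (c + d * z) * (a + b * z)⁻¹ * b).det =
      (Matrix.fromBlocks a b c d).det := by
  have := h.invertible
  have hmul : Matrix.fromBlocks a b c d * Matrix.fromBlocks 1 0 z 1 =
      Matrix.fromBlocks (a + b * z) b (c + d * z) d := by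
    simp [Matrix.fromBlocks_multiply]
  have hdet := congrArg Matrix.det hmul
  rw [Matrix.det_mul, Matrix.det_fromBlocks_zero₁₂,
    Matrix.det_fromBlocks₁₁ (a + b * z)] at hdet
  simpa using hdet.symm

/-- The exact difference formula: no error term, hence continuity of the inverse suffices to
differentiate. -/
lemma fractionalLinear_sub (a : Matrix k k ℂ) (b : Matrix k m ℂ) (c : Matrix m k ℂ)
    (d : Matrix m m ℂ) (z w : Matrix m k ℂ) (hz : IsUnit (a + b * z))
    (hw : IsUnit (a + b * w)) :
    (c + d * w) * (a + b * w)⁻¹ - (c + d * z) * (a + b * z)⁻¹ =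
      (d - (c + d * z) * (a + b * z)⁻¹ * b) * (w - z) * (a + b * w)⁻¹ := by
  have hz' : (a + b * z)⁻¹ * (a + b * z) = 1 :=
    Matrix.nonsing_inv_mul _ ((Matrix.isUnit_iff_isUnit_det _).1 hz)
  have hw' : (a + b * w) * (a + b * w)⁻¹ = 1 :=
    Matrix.mul_nonsing_inv _ ((Matrix.isUnit_iff_isUnit_det _).1 hw)
  have hb : b * (w - z) = (a + b * w) - (a + b * z) := by
    rw [Matrix.mul_sub]; abel
  have hnum : (d - (c + d * z) * (a + b * z)⁻¹ * b) * (w - z) =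
      (c + d * w) - (c + d * z) * (a + b * z)⁻¹ * (a + b * w) := by
    rw [Matrix.sub_mul, Matrix.mul_assoc _ b, hb, Matrix.mul_sub d, Matrix.mul_sub,
      Matrix.mul_assoc _ _ (a + b * z), hz', Matrix.mul_one]
    abel
  rw [hnum, Matrix.sub_mul, Matrix.mul_assoc _ (a + b * w), hw', Matrix.mul_one]

lemma hasFDerivAt_fractionalLinear (a : Matrix k k ℂ) (b : Matrix k m ℂ) (c : Matrix m k ℂ)
    (d : Matrix m m ℂ) (z : Matrix m k ℂ) (h : IsUnit (a + b * z)) :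
    HasFDerivAt (fun w : Matrix m k ℂ => (c + d * w) * (a + b * w)⁻¹)
      (LinearMap.toContinuousLinearMap
        (matrixMulLeft (d - (c + d * z) * (a + b * z)⁻¹ * b) ∘ₗ
          matrixMulRight (a + b * z)⁻¹)) z := by
  set S := d - (c + d * z) * (a + b * z)⁻¹ * b with hS
  have hdet : (a + b * z).det ≠ 0 := ((Matrix.isUnit_iff_isUnit_det _).1 h).ne_zero
  have hcont : Continuous fun w : Matrix m k ℂ => a + b * w := by fun_prop
  have hinv : ContinuousAt (fun w : Matrix m k ℂ => (a + b * w)⁻¹) z := by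
    have hri : ContinuousAt Ring.inverse (a + b * z).det := by
      rw [Ring.inverse_eq_inv']
      exact continuousAt_inv₀ hdet
    exact ContinuousAt.comp (f := fun w : Matrix m k ℂ => a + b * w)
      (continuousAt_matrix_inv _ hri) hcont.continuousAt
  have hunit : ∀ᶠ w in 𝓝 z, IsUnit (a + b * w) := by
    have hne : ∀ᶠ w in 𝓝 z, (a + b * w).det ≠ 0 :=
      hcont.matrix_det.continuousAt.eventually_ne hdet
    filter_upwards [hne] with w hw
    exact (Matrix.isUnit_iff_isUnit_det _).2 hw.isUnit
  have hrem : (fun w : Matrix m k ℂ => S * (w - z) * ((a + b * w)⁻¹ - (a + b * z)⁻¹))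
      =o[𝓝 z] fun w => w - z := by
    refine isLittleO_pi.2 fun i => isLittleO_pi.2 fun j => ?_
    change (fun w : Matrix m k ℂ =>
      ∑ l, (S * (w - z)) i l * ((a + b * w)⁻¹ - (a + b * z)⁻¹) l j) =o[𝓝 z] _
    refine IsLittleO.fun_sum fun l _ => ?_
    have hO : (fun w : Matrix m k ℂ => (S * (w - z)) i l) =O[𝓝 z] fun w => w - z := by
      have h1 := (LinearMap.toContinuousLinearMap
        (matrixMulLeft S : Matrix m k ℂ →ₗ[ℂ] Matrix m k ℂ)).isBigO_sub (𝓝 z) z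
      have h2 : (fun w : Matrix m k ℂ => S * (w - z)) =O[𝓝 z] fun w => w - z := h1
      exact isBigO_pi.1 (isBigO_pi.1 h2 i) l
    have ho : (fun w : Matrix m k ℂ => ((a + b * w)⁻¹ - (a + b * z)⁻¹) l j)
        =o[𝓝 z] fun _ => (1 : ℝ) := by
      rw [isLittleO_one_iff]
      have h3 : ContinuousAt (fun w : Matrix m k ℂ =>
          ((a + b * w)⁻¹ - (a + b * z)⁻¹) l j) z :=
        continuousAt_pi.1 (continuousAt_pi.1 (hinv.sub continuousAt_const) l) j
      simpa [ContinuousAt] using h3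
    have := hO.norm_right.mul_isLittleO ho
    simp only [mul_one] at this
    exact this.of_norm_right
  refine HasFDerivAt.of_isLittleO (hrem.congr' ?_ EventuallyEq.rfl)
  filter_upwards [hunit] with w hw
  rw [fractionalLinear_sub a b c d z w h hw, ← hS]
  change _ = S * (w - z) * (a + b * w)⁻¹ - S * ((w - z) * (a + b * z)⁻¹)
  rw [Matrix.mul_sub, Matrix.mul_assoc S (w - z) (a + b * z)⁻¹]

end Helpers

attribute [local instance] Matrix.normedAddCommGroup Matrix.normedSpace

/-- For `G = Matrix.fromBlocks a b c d` with `det G = 1` (a 2×2, b 2×2n, c 2n×2, d 2n×2n)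
and `a + b*z` invertible, the fractional linear map `T(w) = (c + d*w)*(a + b*w)⁻¹` is
ℂ-differentiable at `z` and the determinant of its Fréchet derivative equals
`(det (a + b*z))⁻¹ ^ (2n+2)`. -/
theorem det_fderiv_fractionalLinear (n : ℕ) (hn : 1 ≤ n)
    (a : Matrix (Fin 2) (Fin 2) ℂ) (b : Matrix (Fin 2) (Fin (2 * n)) ℂ)
    (c : Matrix (Fin (2 * n)) (Fin 2) ℂ) (d : Matrix (Fin (2 * n)) (Fin (2 * n)) ℂ)
    (hG : (Matrix.fromBlocks a b c d).det = 1)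
    (z : Matrix (Fin (2 * n)) (Fin 2) ℂ) (h : IsUnit (a + b * z)) :
    DifferentiableAt ℂ
        (fun w : Matrix (Fin (2 * n)) (Fin 2) ℂ => (c + d * w) * (a + b * w)⁻¹) z ∧
      LinearMap.det
          ((fderiv ℂ
              (fun w : Matrix (Fin (2 * n)) (Fin 2) ℂ => (c + d * w) * (a + b * w)⁻¹)
              z).toLinearMap) =
        ((a + b * z).det)⁻¹ ^ (2 * n + 2) := by
  have hT := hasFDerivAt_fractionalLinear a b c d z h
  refine ⟨hT.differentiableAt, ?_⟩
  have hS := det_mul_det_schur a b c d z h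
  rw [hG] at hS
  rw [hT.fderiv, LinearMap.coe_toContinuousLinearMap, LinearMap.det_comp, det_matrixMulLeft,
    det_matrixMulRight, eq_inv_of_mul_eq_one_right hS, Matrix.det_nonsing_inv,
    Ring.inverse_eq_inv', Fintype.card_fin, Fintype.card_fin, ← pow_add, add_comm 2]
end
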